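/- Consider the AR(1) logit panel model with quarterly fixed effects and covariates, with T = 6: fix γ ∈ ℝ, β ∈ ℝ^{d_x}, an initial condition y_0 ∈ {0,1}, covariates x_1,…,x_6 ∈ ℝ^{d_x}, and a fixed effect A = (A_1,A_2,A_3,A_4) ∈ ℝ⁴; let q(t) := ((t−1) mod 4) + 1 (so q(1)=q(5)=1, q(2)=q(6)=2, q(3)=3, q(4)=4), and for y ∈ {0,1}⁶ define P(y | y_0, x, A) := ∏_{t=1}^6 exp(y_t (γ y_{t−1} + x_tᵀβ + A_{q(t)})) / (1 + exp(γ y_{t−1} + x_tᵀβ + A_{q(t)})), with y_0 the fixed initial value. Writing x_{ts} := x_t − x_s, define m₁ : {0,1}⁶ → ℝ by: m₁(y) = exp(γ[(1−y_0)+1] + (x_{51}+x_{26})ᵀβ) if (y₁,y₂,y₄,y₅,y₆) = (1,0,1,0,1); exp(γ(1−y_0) + (x_{51}+x_{26})ᵀβ) if (y₁,y₂,y₄,y₅,y₆) = (1,0,0,0,1); exp(γ(1−y_0) + x_{51}ᵀβ) if (y₁,y₂,y₄,y₅,y₆) = (1,0,1,0,0); exp(−γ y_0 + x_{51}ᵀβ)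 if (y₁,y₂,y₄,y₅,y₆) = (1,0,0,0,0); exp(x_{26}ᵀβ) − 1 if (y₁,y₂,y₅,y₆) = (0,0,0,1); −1 if (y₁,y₂,y₅) = (0,0,1); exp(−γ y_0 + (x_{51}+x_{62})ᵀβ) if (y₁,y₂,y₄,y₅,y₆) = (1,1,1,0,0); exp(−γ(1+y_0) + (x_{51}+x_{62})ᵀβ) if (y₁,y₂,y₄,y₅,y₆) = (1,1,0,0,0); exp(γ(1−y_0) + x_{51}ᵀβ) if (y₁,y₂,y₄,y₅,y₆) = (1,1,1,0,1); exp(−γ y_0 + x_{51}ᵀβ) if (y₁,y₂,y₄,y₅,y₆) = (1,1,0,0,1); exp(x_{62}ᵀβ) − 1 if (y₁,y₂,y₅,y₆) = (0,1,0,0); −1 if (y₁,y₂,y₅) = (0,1,1); and 0 otherwise (the value of y₃, and of y₄ in the cases where it is unrestricted, is arbitrary). Then for every A ∈ ℝ⁴, Σ_{y ∈ {0,1}⁶} m₁(y) · P(y | y_0, x, A) = 0. -/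

import Mathlib

/-- Conversion of a binary value to a real number. -/
def b2r (x : Bool) : ℝ := if x then 1 else 0

/-- The lagged outcome `y_{t-1}` (with fixed initial value `y₀` at `t = 1`),
0-indexed in `t`. -/
def blag {T : ℕ} (y0 : Bool) (y : Fin T → Bool) (t : Fin T) : Bool :=
  if t.val = 0 then y0
  else y ⟨t.val - 1, lt_of_le_of_lt (Nat.sub_le _ _) t.isLt⟩

/-- The quarter of period `t` (0-indexed periods `0,…,5` and quarters `0,…,3`,
matching `q(t) = ((t-1) mod 4) + 1` in 1-indexed form). -/
def quarter (t : Fin 6) : Fin 4 := ⟨t.val % 4, Nat.mod_lt _ (by norm_num)⟩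

/-- The AR(1) logit probability with quarterly fixed effects and covariates, `T = 6`:
`P(y | y₀, x, A) = ∏_{t=1}^6 exp(y_t (γ y_{t-1} + x_tᵀβ + A_{q(t)})) /
(1 + exp(γ y_{t-1} + x_tᵀβ + A_{q(t)}))`. -/
noncomputable def Pquart {dx : ℕ} (γ : ℝ) (β : Fin dx → ℝ) (y0 : Bool)
    (x : Fin 6 → Fin dx → ℝ) (A : Fin 4 → ℝ) (y : Fin 6 → Bool) : ℝ :=
  ∏ t, Real.exp (b2r (y t) *
        (γ * b2r (blag y0 y t) + (∑ i, x t i * β i) + A (quarter t))) /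
      (1 + Real.exp (γ * b2r (blag y0 y t) + (∑ i, x t i * β i) + A (quarter t)))

/-- The moment function `m₁` (1-indexed `y₁,…,y₆` correspond to `y 0,…,y 5`; the
listed cases are mutually exclusive and `m₁` vanishes otherwise). -/
noncomputable def m1quart {dx : ℕ} (γ : ℝ) (β : Fin dx → ℝ) (y0 : Bool)
    (x : Fin 6 → Fin dx → ℝ) (y : Fin 6 → Bool) : ℝ :=
  let b0 : ℝ := b2r y0
  let d51 : ℝ := ∑ i, (x 4 i - x 0 i) * β i
  let d26 : ℝ := ∑ i, (x 1 i - x 5 i) * β i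
  let d62 : ℝ := ∑ i, (x 5 i - x 1 i) * β i
  if y 0 = true ∧ y 1 = false ∧ y 3 = true ∧ y 4 = false ∧ y 5 = true then
    Real.exp (γ * ((1 - b0) + 1) + (d51 + d26))
  else if y 0 = true ∧ y 1 = false ∧ y 3 = false ∧ y 4 = false ∧ y 5 = true then
    Real.exp (γ * (1 - b0) + (d51 + d26))
  else if y 0 = true ∧ y 1 = false ∧ y 3 = true ∧ y 4 = false ∧ y 5 = false then
    Real.exp (γ * (1 - b0) + d51)
  else if y 0 = true ∧ y 1 = false ∧ y 3 = false ∧ y 4 = false ∧ y 5 = false then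
    Real.exp (-(γ * b0) + d51)
  else if y 0 = false ∧ y 1 = false ∧ y 4 = false ∧ y 5 = true then
    Real.exp d26 - 1
  else if y 0 = false ∧ y 1 = false ∧ y 4 = true then -1
  else if y 0 = true ∧ y 1 = true ∧ y 3 = true ∧ y 4 = false ∧ y 5 = false then
    Real.exp (-(γ * b0) + (d51 + d62))
  else if y 0 = true ∧ y 1 = true ∧ y 3 = false ∧ y 4 = false ∧ y 5 = false then
    Real.exp (-(γ * (1 + b0)) + (d51 + d62))
  else if y 0 = true ∧ y 1 = true ∧ y 3 = true ∧ y 4 = false ∧ y 5 = true then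
    Real.exp (γ * (1 - b0) + d51)
  else if y 0 = true ∧ y 1 = true ∧ y 3 = false ∧ y 4 = false ∧ y 5 = true then
    Real.exp (-(γ * b0) + d51)
  else if y 0 = false ∧ y 1 = true ∧ y 4 = false ∧ y 5 = false then
    Real.exp d62 - 1
  else if y 0 = false ∧ y 1 = true ∧ y 4 = true then -1
  else 0

/-!
The moment function has the form `m₁(y) = 1{y₅ = 0} R(y) - 1{y₁ = 0}`, where `R(y)` is the
likelihood ratio of exchanging the outcomes `(y₁, y₂)` with `(y₅, y₆)` while keeping the indices of
the four periods. Periods 1 and 5 share a quarter, as do 2 and 6, so the fixed effects cancel from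
`R`. Multiplying the path probability by `R` draws `y₅` from the law of period 1 and `y₁`, `y₂`,
`y₆` from those of periods 5, 6, 2. Summing out `y₆`, then `y₁`, then the middle of the path, and
finally `y₂` shows that `y₅` has the law of `y₁`, so both terms of `m₁` have expectation
`P(y₁ = 0)`.
-/

section Logit

/-- The logit probability of the outcome `b` at index `ζ`: the law of a single period. -/
noncomputable def logitProb (b : Bool) (ζ : ℝ) : ℝ :=
  Real.exp (b2r b * ζ) / (1 + Real.exp ζ)

/-- The likelihood ratio of exchanging the outcomes `b` and `b'` of two logit trials with indices
`ζ` and `ζ'`; it depends on the indices only through their difference. -/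
noncomputable def exchangeRatio (b b' : Bool) (ζ ζ' : ℝ) : ℝ :=
  Real.exp ((b2r b' - b2r b) * (ζ - ζ'))

theorem sum_logitProb (ζ : ℝ) : ∑ b, logitProb b ζ = 1 := by
  have : 1 + Real.exp ζ ≠ 0 := by positivity
  simp only [Fintype.sum_bool, logitProb, b2r, if_true, one_mul, Bool.false_eq_true, if_false,
    zero_mul, Real.exp_zero, ← add_div, add_comm (Real.exp ζ) 1, div_self this]

theorem exchangeRatio_mul_logitProb_mul_logitProb (b b' : Bool) (ζ ζ' : ℝ) :
    exchangeRatio b b' ζ ζ' * (logitProb b ζ * logitProb b' ζ') =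
      logitProb b' ζ * logitProb b ζ' := by
  have numerators : Real.exp ((b2r b' - b2r b) * (ζ - ζ')) *
      (Real.exp (b2r b * ζ) * Real.exp (b2r b' * ζ')) =
        Real.exp (b2r b' * ζ) * Real.exp (b2r b * ζ') := by
    simp only [← Real.exp_add]
    ring_nf
  rw [exchangeRatio, logitProb, logitProb, logitProb, logitProb, div_mul_div_comm, ← mul_div_assoc,
    numerators, div_mul_div_comm]

end Logit

section Paths

variable {α M : Type*} {n : ℕ}

theorem sum_fin_cons [Fintype α] [AddCommMonoid M] (f : (Fin (n + 1) → α) → M) :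
    ∑ y, f y = ∑ a, ∑ y : Fin n → α, f (Fin.cons a y) := by
  rw [← (Fin.consEquiv fun _ ↦ α).sum_comp, Fintype.sum_prod_type]
  rfl

theorem sum_fin_snoc [Fintype α] [AddCommMonoid M] (f : (Fin (n + 1) → α) → M) :
    ∑ y, f y = ∑ a, ∑ y : Fin n → α, f (Fin.snoc y a) := by
  rw [← (Fin.snocEquiv fun _ ↦ α).sum_comp, Fintype.sum_prod_type]
  rfl

/-- The path with first outcomes `a, b`, middle part `m` and last outcomes `c, d`. -/
def pathOfEnds (a b : α) (m : Fin n → α) (c d : α) : Fin (n + 4) → α :=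
  Fin.snoc (Fin.snoc (Fin.cons a (Fin.cons b m : Fin (n + 1) → α) : Fin (n + 2) → α) c :
    Fin (n + 3) → α) d

theorem pathOfEnds_zero (a b : α) (m : Fin n → α) (c d : α) :
    pathOfEnds a b m c d 0 = a := rfl

theorem pathOfEnds_one (a b : α) (m : Fin n → α) (c d : α) :
    pathOfEnds a b m c d 1 = b := rfl

theorem pathOfEnds_castSucc_last (a b : α) (m : Fin n → α) (c d : α) :
    pathOfEnds a b m c d (Fin.last (n + 2)).castSucc = c := by
  rw [pathOfEnds, Fin.snoc_castSucc, Fin.snoc_last]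

theorem pathOfEnds_last (a b : α) (m : Fin n → α) (c d : α) :
    pathOfEnds a b m c d (Fin.last (n + 3)) = d := by
  rw [pathOfEnds, Fin.snoc_last]

theorem sum_pathOfEnds [Fintype α] [AddCommMonoid M] (f : (Fin (n + 4) → α) → M) :
    ∑ y, f y = ∑ c, ∑ b, ∑ m : Fin n → α, ∑ a, ∑ d, f (pathOfEnds a b m c d) := by
  calc
    ∑ y, f y = ∑ d, ∑ c, ∑ a, ∑ b, ∑ m : Fin n → α, f (pathOfEnds a b m c d) := by
      simp only [sum_fin_snoc (n := n + 3), sum_fin_snoc (n := n + 2), sum_fin_cons, pathOfEnds]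
    _ = ∑ c, ∑ d, ∑ a, ∑ b, ∑ m : Fin n → α, f (pathOfEnds a b m c d) := Finset.sum_comm
    _ = ∑ c, ∑ b, ∑ d, ∑ a, ∑ m : Fin n → α, f (pathOfEnds a b m c d) :=
      Finset.sum_congr rfl fun _ _ ↦ Finset.sum_comm_cycle
    _ = ∑ c, ∑ b, ∑ m : Fin n → α, ∑ d, ∑ a, f (pathOfEnds a b m c d) :=
      Finset.sum_congr rfl fun _ _ ↦ Finset.sum_congr rfl fun _ _ ↦ Finset.sum_comm_cycle
    _ = ∑ c, ∑ b, ∑ m : Fin n → α, ∑ a, ∑ d, f (pathOfEnds a b m c d) :=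
      Finset.sum_congr rfl fun _ _ ↦ Finset.sum_congr rfl fun _ _ ↦
        Finset.sum_congr rfl fun _ _ ↦ Finset.sum_comm

/-- The last outcome of the path `y` started at `y0`, which is `y0` itself for the empty path. -/
def lastOutcome (y0 : α) (y : Fin n → α) : α :=
  (Fin.cons y0 y : Fin (n + 1) → α) (Fin.last n)

theorem lastOutcome_cons (y0 a : α) (y : Fin n → α) :
    lastOutcome y0 (Fin.cons a y : Fin (n + 1) → α) = lastOutcome a y := rfl

theorem lastOutcome_snoc (y0 a : α) (y : Fin n → α) :
    lastOutcome y0 (Fin.snoc y a : Fin (n + 1) → α) = a := by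
  rw [lastOutcome, Fin.cons_snoc_eq_snoc_cons, Fin.snoc_last]

theorem blag_eq_cons {T : ℕ} (y0 : Bool) (y : Fin T → Bool) (t : Fin T) :
    blag y0 y t = (Fin.cons y0 y : Fin (T + 1) → Bool) t.castSucc := by
  obtain ⟨_ | t, ht⟩ := t <;> rfl

theorem blag_zero {T : ℕ} (y0 : Bool) (y : Fin (T + 1) → Bool) : blag y0 y 0 = y0 := rfl

theorem blag_cons_succ {T : ℕ} (y0 a : Bool) (y : Fin T → Bool) (t : Fin T) :
    blag y0 (Fin.cons a y : Fin (T + 1) → Bool) t.succ = blag a y t := by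
  rw [blag_eq_cons, blag_eq_cons, Fin.castSucc_succ, Fin.cons_succ]

theorem blag_snoc_castSucc {T : ℕ} (y0 a : Bool) (y : Fin T → Bool) (t : Fin T) :
    blag y0 (Fin.snoc y a : Fin (T + 1) → Bool) t.castSucc = blag y0 y t := by
  rw [blag_eq_cons, blag_eq_cons, Fin.cons_snoc_eq_snoc_cons, Fin.snoc_castSucc]

theorem blag_snoc_last {T : ℕ} (y0 a : Bool) (y : Fin T → Bool) :
    blag y0 (Fin.snoc y a : Fin (T + 1) → Bool) (Fin.last T) = lastOutcome y0 y := by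
  rw [blag_eq_cons, Fin.cons_snoc_eq_snoc_cons, Fin.snoc_castSucc, lastOutcome]

end Paths

section Chain

/-- The index of period `t` along the path `y` started at `y0`, where `z t b` is the index of
period `t` when the preceding outcome is `b`. -/
def lagIndex {T : ℕ} (z : Fin T → Bool → ℝ) (y0 : Bool) (y : Fin T → Bool) (t : Fin T) : ℝ :=
  z t (blag y0 y t)

/-- The probability of the path `y` in the binary first-order Markov chain started at `y0` whose
transitions are logit with index `z`. -/
noncomputable def chainProb {T : ℕ} (z : Fin T → Bool → ℝ) (y0 : Bool) (y : Fin T → Bool) : ℝ :=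
  ∏ t, logitProb (y t) (lagIndex z y0 y t)

theorem chainProb_cons {T : ℕ} (z : Fin (T + 1) → Bool → ℝ) (y0 a : Bool) (y : Fin T → Bool) :
    chainProb z y0 (Fin.cons a y : Fin (T + 1) → Bool) =
      logitProb a (z 0 y0) * chainProb (fun t ↦ z t.succ) a y := by
  simp only [chainProb, lagIndex, Fin.prod_univ_succ, Fin.cons_zero, Fin.cons_succ, blag_zero,
    blag_cons_succ]

theorem chainProb_snoc {T : ℕ} (z : Fin (T + 1) → Bool → ℝ) (y0 a : Bool) (y : Fin T → Bool) :
    chainProb z y0 (Fin.snoc y a : Fin (T + 1) → Bool) =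
      chainProb (fun t ↦ z t.castSucc) y0 y *
        logitProb a (z (Fin.last T) (lastOutcome y0 y)) := by
  simp only [chainProb, lagIndex, Fin.prod_univ_castSucc, Fin.snoc_castSucc, Fin.snoc_last,
    blag_snoc_castSucc, blag_snoc_last]

theorem sum_chainProb {T : ℕ} (z : Fin T → Bool → ℝ) (y0 : Bool) : ∑ y, chainProb z y0 y = 1 := by
  induction T generalizing y0 with
  | zero => simp [chainProb]
  | succ T ih =>
    simp only [sum_fin_cons, chainProb_cons, ← Finset.mul_sum, ih, mul_one, sum_logitProb]

theorem sum_apply_zero_mul_chainProb {T : ℕ} (f : Bool → ℝ) (z : Fin (T + 1) → Bool → ℝ)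
    (y0 : Bool) :
    ∑ y, f (y 0) * chainProb z y0 y = ∑ a, f a * logitProb a (z 0 y0) := by
  simp only [sum_fin_cons, chainProb_cons, Fin.cons_zero, ← Finset.mul_sum, sum_chainProb, mul_one]

/-- The likelihood ratio of exchanging the first two outcomes of a path with its last two, in
order, the indices of these four periods being held fixed. -/
noncomputable def exchangeWeight {n : ℕ} (z : Fin (n + 4) → Bool → ℝ) (y0 : Bool)
    (y : Fin (n + 4) → Bool) : ℝ :=
  let s : Fin (n + 4) := (Fin.last (n + 2)).castSucc
  let t : Fin (n + 4) := Fin.last (n + 3)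
  exchangeRatio (y 0) (y s) (lagIndex z y0 y 0) (lagIndex z y0 y s) *
    exchangeRatio (y 1) (y t) (lagIndex z y0 y 1) (lagIndex z y0 y t)

variable {n : ℕ} (z : Fin (n + 4) → Bool → ℝ) (y0 a b : Bool) (m : Fin n → Bool) (c d : Bool)

theorem chainProb_pathOfEnds :
    chainProb z y0 (pathOfEnds a b m c d) =
      logitProb a (z 0 y0) *
        (logitProb b (z 1 a) * chainProb (fun t ↦ z t.succ.succ.castSucc.castSucc) b m) *
        logitProb c (z (Fin.last (n + 2)).castSucc (lastOutcome b m)) *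
        logitProb d (z (Fin.last (n + 3)) c) := by
  rw [pathOfEnds, chainProb_snoc, chainProb_snoc, chainProb_cons, chainProb_cons,
    lastOutcome_snoc, lastOutcome_cons, lastOutcome_cons]
  rfl

theorem exchangeWeight_pathOfEnds :
    exchangeWeight z y0 (pathOfEnds a b m c d) =
      exchangeRatio a c (z 0 y0) (z (Fin.last (n + 2)).castSucc (lastOutcome b m)) *
        exchangeRatio b d (z 1 a) (z (Fin.last (n + 3)) c) := by
  have lag_one : blag y0 (pathOfEnds a b m c d) 1 = a := rfl
  have lag_castSucc_last :
      blag y0 (pathOfEnds a b m c d) (Fin.last (n + 2)).castSucc = lastOutcome b m := by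
    rw [pathOfEnds, blag_snoc_castSucc, blag_snoc_last, lastOutcome_cons, lastOutcome_cons]
  have lag_last : blag y0 (pathOfEnds a b m c d) (Fin.last (n + 3)) = c := by
    rw [pathOfEnds, blag_snoc_last, lastOutcome_snoc]
  simp only [exchangeWeight, lagIndex, blag_zero, lag_one, lag_castSucc_last, lag_last,
    pathOfEnds_zero, pathOfEnds_one, pathOfEnds_castSucc_last, pathOfEnds_last]

-- The factors are nested in the order in which `a` and `d`, then `m`, then `b` are summed out.
theorem exchangeWeight_mul_chainProb_pathOfEnds :
    exchangeWeight z y0 (pathOfEnds a b m c d) * chainProb z y0 (pathOfEnds a b m c d) =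
      logitProb c (z 0 y0) * (logitProb b (z (Fin.last (n + 3)) c) *
        (chainProb (fun t ↦ z t.succ.succ.castSucc.castSucc) b m *
          (logitProb a (z (Fin.last (n + 2)).castSucc (lastOutcome b m)) *
            logitProb d (z 1 a)))) := by
  have exchange_first := exchangeRatio_mul_logitProb_mul_logitProb a c (z 0 y0)
    (z (Fin.last (n + 2)).castSucc (lastOutcome b m))
  have exchange_second := exchangeRatio_mul_logitProb_mul_logitProb b d (z 1 a)
    (z (Fin.last (n + 3)) c)
  rw [exchangeWeight_pathOfEnds, chainProb_pathOfEnds]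
  set middle := chainProb (fun t ↦ z t.succ.succ.castSucc.castSucc) b m
  calc
    _ = middle * (exchangeRatio a c _ _ * (logitProb a _ * logitProb c _)) *
        (exchangeRatio b d _ _ * (logitProb b _ * logitProb d _)) := by ring
    _ = middle * (logitProb c _ * logitProb a _) * (logitProb d _ * logitProb b _) := by
      rw [exchange_first, exchange_second]
    _ = _ := by ring

theorem sum_apply_mul_exchangeWeight_mul_chainProb (f : Bool → ℝ) :
    ∑ y, f (y (Fin.last (n + 2)).castSucc) * (exchangeWeight z y0 y * chainProb z y0 y) =
      ∑ y, f (y 0) * chainProb z y0 y := by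
  calc
    _ = ∑ c, f c * logitProb c (z 0 y0) := by
      simp only [sum_pathOfEnds, pathOfEnds_castSucc_last, exchangeWeight_mul_chainProb_pathOfEnds,
        ← Finset.mul_sum, sum_logitProb, mul_one, sum_chainProb]
    _ = _ := (sum_apply_zero_mul_chainProb f z y0).symm

end Chain

section Quarterly

/-- The index of period `t` in the quarterly model when the preceding outcome is `b`. -/
noncomputable def quartIndex {dx : ℕ} (γ : ℝ) (β : Fin dx → ℝ) (x : Fin 6 → Fin dx → ℝ)
    (A : Fin 4 → ℝ) (t : Fin 6) (b : Bool) : ℝ :=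
  γ * b2r b + (∑ i, x t i * β i) + A (quarter t)

variable {dx : ℕ} (γ : ℝ) (β : Fin dx → ℝ) (y0 : Bool) (x : Fin 6 → Fin dx → ℝ) (A : Fin 4 → ℝ)

theorem Pquart_eq_chainProb (y : Fin 6 → Bool) :
    Pquart γ β y0 x A y = chainProb (quartIndex γ β x A) y0 y := rfl

theorem quartIndex_sub_quartIndex {s t : Fin 6} (hst : quarter s = quarter t) (b b' : Bool) :
    quartIndex γ β x A s b - quartIndex γ β x A t b' =
      γ * (b2r b - b2r b') + ∑ i, (x s i - x t i) * β i := by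
  simp only [quartIndex, hst, sub_mul, Finset.sum_sub_distrib]
  ring

theorem exchangeWeight_quartIndex (y : Fin 6 → Bool) :
    exchangeWeight (n := 2) (quartIndex γ β x A) y0 y =
      Real.exp ((b2r (y 4) - b2r (y 0)) *
          (γ * (b2r y0 - b2r (y 3)) + ∑ i, (x 0 i - x 4 i) * β i)) *
        Real.exp ((b2r (y 5) - b2r (y 1)) *
          (γ * (b2r (y 0) - b2r (y 4)) + ∑ i, (x 1 i - x 5 i) * β i)) := by
  rw [← quartIndex_sub_quartIndex γ β x A (s := 0) (t := 4) rfl,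
    ← quartIndex_sub_quartIndex γ β x A (s := 1) (t := 5) rfl]
  rfl

theorem m1quart_eq_exchangeWeight (y : Fin 6 → Bool) :
    m1quart γ β y0 x y =
      b2r (!y 4) * exchangeWeight (n := 2) (quartIndex γ β x A) y0 y - b2r (!y 0) := by
  have sum_sub_comm (s t : Fin 6) : ∑ i, (x s i - x t i) * β i = -∑ i, (x t i - x s i) * β i := by
    simp only [← Finset.sum_neg_distrib, neg_mul_eq_neg_mul, neg_sub]
  rw [exchangeWeight_quartIndex, ← Real.exp_add, m1quart, sum_sub_comm 0 4, sum_sub_comm 5 1]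
  generalize ∑ i, (x 4 i - x 0 i) * β i = d51
  generalize ∑ i, (x 1 i - x 5 i) * β i = d26
  generalize b2r y0 = b0
  cases y 0 <;> cases y 1 <;> cases y 3 <;> cases y 4 <;> cases y 5 <;> simp [b2r] <;> ring_nf

end Quarterly

/-- In the AR(1) logit panel model with quarterly fixed effects,
covariates and `T = 6`, the function `m₁` is a valid fixed-effect-free moment
function: `Σ_{y ∈ {0,1}⁶} m₁(y) P(y | y₀, x, A) = 0` for every `A ∈ ℝ⁴`. -/
theorem stmt17 {dx : ℕ} (hdx : 1 ≤ dx) (γ : ℝ) (β : Fin dx → ℝ) (y0 : Bool)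
    (x : Fin 6 → Fin dx → ℝ) :
    ∀ A : Fin 4 → ℝ,
      ∑ y : Fin 6 → Bool, m1quart γ β y0 x y * Pquart γ β y0 x A y = 0 := by
  intro A
  have expectations_eq := sum_apply_mul_exchangeWeight_mul_chainProb (n := 2)
    (quartIndex γ β x A) y0 fun b ↦ b2r (!b)
  simp only [m1quart_eq_exchangeWeight γ β y0 x A, Pquart_eq_chainProb, sub_mul,
    Finset.sum_sub_distrib, mul_assoc]
  exact sub_eq_zero.mpr expectations_eq
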